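/- Let H be a complex separable Hilbert space, let B be a densely defined closed linear operator in H and A a bounded operator on H such that A, B and AB are all normal. If A*AB ⊂ BA*A and AB*B ⊂ B*BA, then BA is normal. -/

import Mathlib

/-! Write `T = B*B`, `P = A*A` and `M = BA`. The two inclusions and the normality of `A` and `B`
show that `PT` is contained in both `M*M` and `MM*`. By von Neumann's theorem these two products are
self-adjoint, so taking adjoints puts both of them inside `(PT)* = TP`. But `1 + TP` is injective,
because `T` and `P` are positive, while `1 + M*M` and `1 + MM*` are onto, so neither inclusion is
proper and `M*M = TP = MM*`. -/

noncomputable section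

variable {H : Type*} [NormedAddCommGroup H] [InnerProductSpace ℂ H] [CompleteSpace H]

namespace LinearPMap

/-- The composition `S ∘ T` of two partially defined linear operators, with its natural
domain `{x ∈ D(T) : T x ∈ D(S)}`. -/
noncomputable def pcomp (S T : H →ₗ.[ℂ] H) : H →ₗ.[ℂ] H :=
  { domain := (S.domain.comap T.toFun).map T.domain.subtype
    toFun := (S.toFun.comp ((T.toFun.comp (S.domain.comap T.toFun).subtype).codRestrict
        S.domain fun x => x.2)).comp
      (Submodule.equivMapOfInjective T.domain.subtype Subtype.val_injective
        (S.domain.comap T.toFun)).symm.toLinearMap }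

/-- A bounded operator viewed as a partially defined operator with domain the
whole space. -/
noncomputable def ofCLM (A : H →L[ℂ] H) : H →ₗ.[ℂ] H :=
  A.toLinearMap.toPMap ⊤

/-- An unbounded densely defined operator is *normal* if it is closed and
`N N* = N* N` (including equality of the natural domains). -/
def IsNormalPMap (N : H →ₗ.[ℂ] H) : Prop :=
  Dense (N.domain : Set H) ∧ N.IsClosed ∧ N.pcomp N.adjoint = N.adjoint.pcomp N

end LinearPMap

open LinearPMap ContinuousLinearMap

/-- A bounded operator `T` is *normal* if `T T* = T* T`. -/
def IsNormalOp (T : H →L[ℂ] H) : Prop :=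
  T * ContinuousLinearMap.adjoint T = ContinuousLinearMap.adjoint T * T

open Function
open scoped InnerProductSpace

local postfix:1024 "⋆" => ContinuousLinearMap.adjoint

section OneAdd

variable {R E : Type*} [Ring R] [AddCommGroup E] [Module R E]

/-- The operator `1 + T` of a partially defined operator `T`, as a linear map on the domain
of `T`. A symmetric `T` is self-adjoint as soon as this map is onto. -/
def oneAdd (T : E →ₗ.[R] E) : T.domain →ₗ[R] E :=
  T.domain.subtype + T.toFun

theorem oneAdd_apply (T : E →ₗ.[R] E) (x : T.domain) : oneAdd T x = x + T x :=
  rfl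

theorem surjective_oneAdd_iff {T : E →ₗ.[R] E} :
    Surjective (oneAdd T) ↔ ∀ y, ∃ x z, (x, z) ∈ T.graph ∧ x + z = y := by
  refine forall_congr' fun y => ⟨fun ⟨x, hx⟩ => ⟨x, T x, T.mem_graph x, hx⟩, ?_⟩
  rintro ⟨x, z, hxz, rfl⟩
  obtain ⟨x, rfl, rfl⟩ := T.mem_graph_iff.1 hxz
  exact ⟨x, rfl⟩

theorem eq_of_le_of_surjective_of_injective_oneAdd {S T : E →ₗ.[R] E} (hST : S ≤ T)
    (hS : Surjective (oneAdd S)) (hT : Injective (oneAdd T)) : S = T := by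
  refine eq_of_le_of_domain_eq hST (le_antisymm hST.1 fun x hx => ?_)
  obtain ⟨y, hy⟩ := hS (oneAdd T ⟨x, hx⟩)
  have hyT : oneAdd T ⟨y, hST.1 y.2⟩ = oneAdd S y :=
    congrArg ((y : E) + ·) (hST.2 rfl).symm
  have hyx : (y : E) = x := Subtype.ext_iff.1 (hT (hyT.trans hy))
  exact hyx ▸ y.2

end OneAdd

section Adjoint

variable {𝕜 E F : Type*} [RCLike 𝕜] [NormedAddCommGroup E] [InnerProductSpace 𝕜 E]
  [NormedAddCommGroup F] [InnerProductSpace 𝕜 F]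

theorem inner_eq_of_mem_graph {T : E →ₗ.[𝕜] F} {S : F →ₗ.[𝕜] E} (h : T.IsFormalAdjoint S)
    {x v : E} {y u : F} (hxy : (x, y) ∈ T.graph) (huv : (u, v) ∈ S.graph) :
    ⟪y, u⟫_𝕜 = ⟪x, v⟫_𝕜 := by
  obtain ⟨x, rfl, rfl⟩ := T.mem_graph_iff.1 hxy
  obtain ⟨u, rfl, rfl⟩ := S.mem_graph_iff.1 huv
  exact h x u

theorem eq_zero_of_forall_inner_oneAdd_eq_zero {T : E →ₗ.[𝕜] E} (hT : Surjective (oneAdd T))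
    {w : E} (hw : ∀ u, ⟪w, oneAdd T u⟫_𝕜 = 0) : w = 0 := by
  obtain ⟨u, hu⟩ := hT w
  exact inner_self_eq_zero.1 (hu ▸ hw u)

theorem inner_oneAdd_left {T : E →ₗ.[𝕜] E} (hT : T.IsFormalAdjoint T) (x u : T.domain) :
    ⟪oneAdd T x, (u : E)⟫_𝕜 = ⟪(x : E), oneAdd T u⟫_𝕜 := by
  rw [oneAdd_apply, oneAdd_apply, inner_add_left, inner_add_right, hT]

variable [CompleteSpace E]

theorem mem_graph_adjoint_iff {T : E →ₗ.[𝕜] F} (hT : Dense (T.domain : Set E)) {y : F} {w : E} :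
    (y, w) ∈ T†.graph ↔ ∀ a b, (a, b) ∈ T.graph → ⟪b, y⟫_𝕜 = ⟪a, w⟫_𝕜 := by
  simp only [adjoint_graph_eq_graph_adjoint hT, Submodule.mem_adjoint_iff, sub_eq_zero]

theorem adjoint_le_adjoint {S T : E →ₗ.[𝕜] F} (hS : Dense (S.domain : Set E)) (h : S ≤ T) :
    T† ≤ S† := by
  refine le_of_le_graph fun ⟨y, w⟩ hyw => (mem_graph_adjoint_iff hS).2 fun a b hab => ?_
  exact (mem_graph_adjoint_iff (hS.mono h.1)).1 hyw a b (le_graph_of_le h hab)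

theorem exists_mem_graph_add_mem_graph_adjoint [CompleteSpace F] {T : E →ₗ.[𝕜] F}
    (hT : Dense (T.domain : Set E)) (hTc : T.IsClosed) (h : E) (k : F) :
    ∃ x b p q, (x, b) ∈ T.graph ∧ (q, -p) ∈ T†.graph ∧ h = x + p ∧ k = b + q := by
  let e := WithLp.prodContinuousLinearEquiv 2 𝕜 E F
  let G : Submodule 𝕜 (WithLp 2 (E × F)) := T.graph.comap e.toLinearEquiv.toLinearMap
  have hG : _root_.IsClosed (G : Set (WithLp 2 (E × F))) := hTc.preimage e.continuous
  have : CompleteSpace G := hG.completeSpace_coe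
  obtain ⟨g, hg, r, hr, hgr⟩ := G.exists_add_mem_mem_orthogonal (WithLp.toLp 2 (h, k))
  refine ⟨g.fst, g.snd, r.fst, r.snd, hg, ?_, congrArg WithLp.fst hgr, congrArg WithLp.snd hgr⟩
  refine (mem_graph_adjoint_iff hT).2 fun a b hab => ?_
  have hort := (Submodule.mem_orthogonal G r).1 hr (WithLp.toLp 2 (a, b)) hab
  rw [WithLp.prod_inner_apply] at hort
  rw [inner_neg_right]
  exact eq_neg_of_add_eq_zero_right hort

variable {T : E →ₗ.[𝕜] E}

theorem dense_domain_of_isFormalAdjoint_self (hT : T.IsFormalAdjoint T)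
    (hsurj : Surjective (oneAdd T)) : Dense (T.domain : Set E) := by
  rw [Submodule.dense_iff_topologicalClosure_eq_top, Submodule.topologicalClosure_eq_top_iff,
    Submodule.eq_bot_iff]
  intro w hw
  obtain ⟨y, rfl⟩ := hsurj w
  have hy : y = 0 := Subtype.ext <| eq_zero_of_forall_inner_oneAdd_eq_zero hsurj fun u => by
    rw [← inner_oneAdd_left hT, Submodule.inner_left_of_mem_orthogonal u.2 hw]
  rw [hy, _root_.map_zero]

theorem isSelfAdjoint_of_isFormalAdjoint_self (hT : T.IsFormalAdjoint T)
    (hsurj : Surjective (oneAdd T)) : IsSelfAdjoint T := by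
  have hdense := dense_domain_of_isFormalAdjoint_self hT hsurj
  have hinj : Injective (oneAdd T†) := by
    refine (injective_iff_map_eq_zero _).2 fun w hw => Subtype.ext ?_
    refine eq_zero_of_forall_inner_oneAdd_eq_zero hsurj fun u => ?_
    rw [oneAdd_apply, inner_add_right, ← adjoint_isFormalAdjoint hdense, ← inner_add_left,
      ← oneAdd_apply, hw, inner_zero_left]
  exact (eq_of_le_of_surjective_of_injective_oneAdd (hT.le_adjoint hdense) hsurj hinj).symm

end Adjoint

section Composition

omit [CompleteSpace H]

theorem mem_domain_pcomp_iff {S T : H →ₗ.[ℂ] H} {x : H} :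
    x ∈ (S.pcomp T).domain ↔ ∃ hx : x ∈ T.domain, T ⟨x, hx⟩ ∈ S.domain :=
  ⟨fun ⟨a, ha, hax⟩ => hax ▸ ⟨a.2, ha⟩, fun ⟨hx, hTx⟩ => ⟨⟨x, hx⟩, hTx, rfl⟩⟩

theorem pcomp_apply {S T : H →ₗ.[ℂ] H} {x : H} (hx : x ∈ T.domain)
    (hTx : T ⟨x, hx⟩ ∈ S.domain) :
    S.pcomp T ⟨x, mem_domain_pcomp_iff.2 ⟨hx, hTx⟩⟩ = S ⟨T ⟨x, hx⟩, hTx⟩ := by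
  let e := Submodule.equivMapOfInjective T.domain.subtype Subtype.val_injective
    (S.domain.comap T.toFun)
  have he : e.symm ⟨x, mem_domain_pcomp_iff.2 ⟨hx, hTx⟩⟩ = ⟨⟨x, hx⟩, hTx⟩ :=
    e.symm_apply_eq.2 rfl
  exact congrArg (fun a : S.domain.comap T.toFun => S ⟨T a, a.2⟩) he

theorem mem_graph_pcomp_iff {S T : H →ₗ.[ℂ] H} {x z : H} :
    (x, z) ∈ (S.pcomp T).graph ↔ ∃ y, (x, y) ∈ T.graph ∧ (y, z) ∈ S.graph := by
  constructor
  · intro h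
    obtain ⟨⟨x, hx⟩, rfl, rfl⟩ := (LinearPMap.mem_graph_iff _).1 h
    obtain ⟨hxT, hTx⟩ := mem_domain_pcomp_iff.1 hx
    exact ⟨T ⟨x, hxT⟩, T.mem_graph ⟨x, hxT⟩, pcomp_apply hxT hTx ▸ S.mem_graph ⟨_, hTx⟩⟩
  · rintro ⟨y, hxy, hyz⟩
    obtain ⟨x, rfl, rfl⟩ := T.mem_graph_iff.1 hxy
    have hTx := mem_domain_of_mem_graph hyz
    obtain rfl := (image_iff hTx).2 hyz
    rw [← pcomp_apply x.2 hTx]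
    exact (S.pcomp T).mem_graph ⟨x, _⟩

theorem pcomp_assoc (R S T : H →ₗ.[ℂ] H) : (R.pcomp S).pcomp T = R.pcomp (S.pcomp T) := by
  refine eq_of_eq_graph (SetLike.ext fun ⟨x, z⟩ => ?_)
  simp only [mem_graph_pcomp_iff]
  grind

theorem pcomp_le_pcomp {S S' T T' : H →ₗ.[ℂ] H} (hS : S ≤ S') (hT : T ≤ T') :
    S.pcomp T ≤ S'.pcomp T' := by
  refine le_of_le_graph fun ⟨x, z⟩ hxz => ?_
  obtain ⟨y, hxy, hyz⟩ := mem_graph_pcomp_iff.1 hxz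
  exact mem_graph_pcomp_iff.2 ⟨y, le_graph_of_le hT hxy, le_graph_of_le hS hyz⟩

theorem domain_pcomp_le (S T : H →ₗ.[ℂ] H) : (S.pcomp T).domain ≤ T.domain :=
  fun _ hx => (mem_domain_pcomp_iff.1 hx).1

theorem isFormalAdjoint_pcomp {S S' T T' : H →ₗ.[ℂ] H} (h : T.IsFormalAdjoint S)
    (h' : T'.IsFormalAdjoint S') : (T.pcomp T').IsFormalAdjoint (S'.pcomp S) := by
  intro x u
  obtain ⟨y, hxy, hyz⟩ := mem_graph_pcomp_iff.1 ((T.pcomp T').mem_graph x)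
  obtain ⟨v, huv, hvw⟩ := mem_graph_pcomp_iff.1 ((S'.pcomp S).mem_graph u)
  rw [inner_eq_of_mem_graph h hyz huv, inner_eq_of_mem_graph h' hxy hvw]

theorem mem_graph_ofCLM_iff {A : H →L[ℂ] H} {x y : H} : (x, y) ∈ (ofCLM A).graph ↔ A x = y :=
  ⟨fun h => ((image_iff (f := ofCLM A) trivial).2 h).symm,
    fun h => (image_iff (f := ofCLM A) trivial).1 h.symm⟩

theorem mem_graph_pcomp_ofCLM_iff {T : H →ₗ.[ℂ] H} {A : H →L[ℂ] H} {x z : H} :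
    (x, z) ∈ (T.pcomp (ofCLM A)).graph ↔ (A x, z) ∈ T.graph := by
  simp only [mem_graph_pcomp_iff, mem_graph_ofCLM_iff, exists_eq_left']

theorem mem_graph_ofCLM_pcomp_iff {T : H →ₗ.[ℂ] H} {A : H →L[ℂ] H} {x z : H} :
    (x, z) ∈ ((ofCLM A).pcomp T).graph ↔ ∃ y, (x, y) ∈ T.graph ∧ A y = z := by
  simp only [mem_graph_pcomp_iff, mem_graph_ofCLM_iff]

theorem ofCLM_mul (A C : H →L[ℂ] H) : ofCLM (A * C) = (ofCLM A).pcomp (ofCLM C) := by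
  refine eq_of_eq_graph (SetLike.ext fun ⟨x, z⟩ => ?_)
  rw [mem_graph_pcomp_ofCLM_iff, mem_graph_ofCLM_iff, mem_graph_ofCLM_iff]
  rfl

theorem domain_ofCLM_pcomp (A : H →L[ℂ] H) (T : H →ₗ.[ℂ] H) :
    ((ofCLM A).pcomp T).domain = T.domain :=
  le_antisymm (domain_pcomp_le _ _) fun _ hx => mem_domain_pcomp_iff.2 ⟨hx, trivial⟩

theorem dense_domain_pcomp_ofCLM {S T : H →ₗ.[ℂ] H} {A : H →L[ℂ] H}
    (hST : Dense ((S.pcomp T).domain : Set H))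
    (h : (ofCLM A).pcomp (S.pcomp T) ≤ (S.pcomp T).pcomp (ofCLM A)) :
    Dense ((T.pcomp (ofCLM A)).domain : Set H) := by
  refine hST.mono ?_
  calc (S.pcomp T).domain = ((ofCLM A).pcomp (S.pcomp T)).domain := (domain_ofCLM_pcomp _ _).symm
    _ ≤ ((S.pcomp T).pcomp (ofCLM A)).domain := h.1
    _ = (S.pcomp (T.pcomp (ofCLM A))).domain := by rw [pcomp_assoc]
    _ ≤ (T.pcomp (ofCLM A)).domain := domain_pcomp_le _ _

theorem isClosed_pcomp_ofCLM {T : H →ₗ.[ℂ] H} (hT : T.IsClosed) (A : H →L[ℂ] H) :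
    (T.pcomp (ofCLM A)).IsClosed := by
  have hpre : ((T.pcomp (ofCLM A)).graph : Set (H × H)) = Prod.map A id ⁻¹' T.graph :=
    Set.ext fun _ => mem_graph_pcomp_ofCLM_iff
  rw [LinearPMap.IsClosed, hpre]
  exact hT.preimage (A.continuous.prodMap continuous_id)

end Composition

section BoundedFactor

theorem adjoint_ofCLM_pcomp {T : H →ₗ.[ℂ] H} (hT : Dense (T.domain : Set H)) (A : H →L[ℂ] H) :
    ((ofCLM A).pcomp T)† = T†.pcomp (ofCLM A⋆) := by
  have hAT : Dense (((ofCLM A).pcomp T).domain : Set H) := domain_ofCLM_pcomp A T ▸ hT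
  refine eq_of_eq_graph (SetLike.ext fun ⟨y, w⟩ => ?_)
  simp only [mem_graph_pcomp_ofCLM_iff, mem_graph_adjoint_iff hAT, mem_graph_adjoint_iff hT,
    mem_graph_ofCLM_pcomp_iff, ContinuousLinearMap.adjoint_inner_right]
  grind

theorem ofCLM_adjoint_pcomp_adjoint_le {T : H →ₗ.[ℂ] H} {A : H →L[ℂ] H}
    (hT : Dense (T.domain : Set H)) (hTA : Dense ((T.pcomp (ofCLM A)).domain : Set H)) :
    (ofCLM A⋆).pcomp T† ≤ (T.pcomp (ofCLM A))† := by
  refine le_of_le_graph fun ⟨y, w⟩ hyw => (mem_graph_adjoint_iff hTA).2 fun a b hab => ?_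
  obtain ⟨v, hyv, rfl⟩ := mem_graph_ofCLM_pcomp_iff.1 hyw
  rw [ContinuousLinearMap.adjoint_inner_right]
  exact (mem_graph_adjoint_iff hT).1 hyv _ _ (mem_graph_pcomp_ofCLM_iff.1 hab)

end BoundedFactor

section VonNeumann

variable {T : H →ₗ.[ℂ] H}

theorem surjective_oneAdd_adjoint_pcomp_self (hT : Dense (T.domain : Set H))
    (hTc : T.IsClosed) : Surjective (oneAdd (T†.pcomp T)) := by
  refine surjective_oneAdd_iff.2 fun h => ?_
  obtain ⟨x, b, p, q, hxb, hqp, hh, hbq⟩ := exists_mem_graph_add_mem_graph_adjoint hT hTc h 0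
  have hb : b = -q := eq_neg_of_add_eq_zero_left hbq.symm
  have hbp : (b, p) ∈ T†.graph := by simpa [hb] using T†.graph.neg_mem hqp
  exact ⟨x, p, mem_graph_pcomp_iff.2 ⟨b, hxb, hbp⟩, hh.symm⟩

theorem surjective_oneAdd_pcomp_adjoint_self (hT : Dense (T.domain : Set H))
    (hTc : T.IsClosed) : Surjective (oneAdd (T.pcomp T†)) := by
  refine surjective_oneAdd_iff.2 fun k => ?_
  obtain ⟨x, b, p, q, hxb, hqp, hxp, hk⟩ := exists_mem_graph_add_mem_graph_adjoint hT hTc 0 k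
  have hx : x = -p := eq_neg_of_add_eq_zero_left hxp.symm
  exact ⟨q, b, mem_graph_pcomp_iff.2 ⟨-p, hqp, hx ▸ hxb⟩, hk ▸ add_comm q b⟩

theorem isSelfAdjoint_adjoint_pcomp_self (hT : Dense (T.domain : Set H)) (hTc : T.IsClosed) :
    IsSelfAdjoint (T†.pcomp T) :=
  have hadj := adjoint_isFormalAdjoint hT
  isSelfAdjoint_of_isFormalAdjoint_self (isFormalAdjoint_pcomp hadj hadj.symm)
    (surjective_oneAdd_adjoint_pcomp_self hT hTc)

theorem isSelfAdjoint_pcomp_adjoint_self (hT : Dense (T.domain : Set H)) (hTc : T.IsClosed) :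
    IsSelfAdjoint (T.pcomp T†) :=
  have hadj := adjoint_isFormalAdjoint hT
  isSelfAdjoint_of_isFormalAdjoint_self (isFormalAdjoint_pcomp hadj.symm hadj)
    (surjective_oneAdd_pcomp_adjoint_self hT hTc)

theorem re_inner_adjoint_pcomp_self_nonneg (hT : Dense (T.domain : Set H))
    (x : (T†.pcomp T).domain) : 0 ≤ (⟪(x : H), T†.pcomp T x⟫_ℂ).re := by
  obtain ⟨y, hxy, hyz⟩ := mem_graph_pcomp_iff.1 ((T†.pcomp T).mem_graph x)
  rw [← (mem_graph_adjoint_iff hT).1 hyz _ _ hxy]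
  exact inner_self_nonneg (𝕜 := ℂ)

end VonNeumann

section PositiveFactors

variable {T : H →ₗ.[ℂ] H} {A : H →L[ℂ] H}

theorem injective_oneAdd_pcomp_ofCLM_adjoint_mul_self
    (hT : ∀ x : T.domain, 0 ≤ (⟪(x : H), T x⟫_ℂ).re) :
    Injective (oneAdd (T.pcomp (ofCLM (A⋆ * A)))) := by
  refine (injective_iff_map_eq_zero _).2 fun x hx => Subtype.ext ?_
  obtain ⟨y, hy, hTy⟩ := (LinearPMap.mem_graph_iff _).1
    (mem_graph_pcomp_ofCLM_iff.1 ((T.pcomp (ofCLM (A⋆ * A))).mem_graph x))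
  replace hy : (y : H) = A⋆ (A x) := hy
  have hTyx : T y = -(x : H) := eq_neg_of_add_eq_zero_right (hTy ▸ hx)
  have hinner : ⟪(y : H), T y⟫_ℂ = -⟪A x, A x⟫_ℂ := by
    rw [hy, ContinuousLinearMap.adjoint_inner_left, hTyx, _root_.map_neg, inner_neg_right]
  have hAx : A x = 0 := by
    have hnonneg := hT y
    rw [hinner, Complex.neg_re] at hnonneg
    exact (re_inner_self_nonpos (𝕜 := ℂ)).1 (neg_nonneg.1 hnonneg)
  have hy0 : y = 0 := Subtype.ext (by rw [hy, hAx, _root_.map_zero, Submodule.coe_zero])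
  exact neg_eq_zero.1 (by rw [← hTyx, hy0, LinearPMap.map_zero])

theorem eq_pcomp_ofCLM_adjoint_mul_self_of_le {R : H →ₗ.[ℂ] H} (hR : IsSelfAdjoint R)
    (hRsurj : Surjective (oneAdd R)) (hT : IsSelfAdjoint T)
    (hTpos : ∀ x : T.domain, 0 ≤ (⟪(x : H), T x⟫_ℂ).re)
    (hTR : (ofCLM (A⋆ * A)).pcomp T ≤ R) : R = T.pcomp (ofCLM (A⋆ * A)) := by
  have hP : (A⋆ * A)⋆ = A⋆ * A := IsSelfAdjoint.star_mul_self A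
  have hPT : Dense (((ofCLM (A⋆ * A)).pcomp T).domain : Set H) :=
    domain_ofCLM_pcomp _ T ▸ hT.dense_domain
  have hRT : R ≤ T.pcomp (ofCLM (A⋆ * A)) :=
    calc R = R† := hR.symm
      _ ≤ ((ofCLM (A⋆ * A)).pcomp T)† := adjoint_le_adjoint hPT hTR
      _ = T†.pcomp (ofCLM (A⋆ * A)⋆) := adjoint_ofCLM_pcomp hT.dense_domain _
      _ = T.pcomp (ofCLM (A⋆ * A)) := by rw [isSelfAdjoint_def.1 hT, hP]
  exact eq_of_le_of_surjective_of_injective_oneAdd hRT hRsurj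
    (injective_oneAdd_pcomp_ofCLM_adjoint_mul_self hTpos)

end PositiveFactors

section Kaplansky

variable {A : H →L[ℂ] H} {B : H →ₗ.[ℂ] H}

theorem ofCLM_adjoint_mul_self_pcomp_le_adjoint_pcomp_self (hB : Dense (B.domain : Set H))
    (hBA : Dense ((B.pcomp (ofCLM A)).domain : Set H))
    (h : (ofCLM A).pcomp (B†.pcomp B) ≤ (B†.pcomp B).pcomp (ofCLM A)) :
    (ofCLM (A⋆ * A)).pcomp (B†.pcomp B) ≤ (B.pcomp (ofCLM A))†.pcomp (B.pcomp (ofCLM A)) :=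
  calc (ofCLM (A⋆ * A)).pcomp (B†.pcomp B)
      = (ofCLM A⋆).pcomp ((ofCLM A).pcomp (B†.pcomp B)) := by rw [ofCLM_mul, pcomp_assoc]
    _ ≤ (ofCLM A⋆).pcomp ((B†.pcomp B).pcomp (ofCLM A)) := pcomp_le_pcomp le_rfl h
    _ = ((ofCLM A⋆).pcomp B†).pcomp (B.pcomp (ofCLM A)) := by simp only [pcomp_assoc]
    _ ≤ (B.pcomp (ofCLM A))†.pcomp (B.pcomp (ofCLM A)) :=
        pcomp_le_pcomp (ofCLM_adjoint_pcomp_adjoint_le hB hBA) le_rfl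

theorem ofCLM_adjoint_mul_self_pcomp_le_pcomp_adjoint_self (hA : IsNormalOp A)
    (hB : Dense (B.domain : Set H)) (hBA : Dense ((B.pcomp (ofCLM A)).domain : Set H))
    (h : (ofCLM (A⋆ * A)).pcomp B ≤ B.pcomp (ofCLM (A⋆ * A))) :
    (ofCLM (A⋆ * A)).pcomp (B.pcomp B†) ≤ (B.pcomp (ofCLM A)).pcomp (B.pcomp (ofCLM A))† :=
  calc (ofCLM (A⋆ * A)).pcomp (B.pcomp B†)
      = ((ofCLM (A⋆ * A)).pcomp B).pcomp B† := (pcomp_assoc _ _ _).symm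
    _ ≤ (B.pcomp (ofCLM (A⋆ * A))).pcomp B† := pcomp_le_pcomp h le_rfl
    _ = (B.pcomp (ofCLM (A * A⋆))).pcomp B† := by rw [show A * A⋆ = A⋆ * A from hA]
    _ = (B.pcomp (ofCLM A)).pcomp ((ofCLM A⋆).pcomp B†) := by simp only [ofCLM_mul, pcomp_assoc]
    _ ≤ (B.pcomp (ofCLM A)).pcomp (B.pcomp (ofCLM A))† :=
        pcomp_le_pcomp le_rfl (ofCLM_adjoint_pcomp_adjoint_le hB hBA)

end Kaplansky

theorem kaplansky_unbounded_normal_general (B : H →ₗ.[ℂ] H) (A : H →L[ℂ] H)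
    (hA : IsNormalOp A) (hB : IsNormalPMap B)
    (h1 : (ofCLM (A⋆ * A)).pcomp B ≤ B.pcomp (ofCLM (A⋆ * A)))
    (h2 : (ofCLM A).pcomp (B†.pcomp B) ≤ (B†.pcomp B).pcomp (ofCLM A)) :
    IsNormalPMap (B.pcomp (ofCLM A)) := by
  obtain ⟨hBd, hBc, hBB⟩ := hB
  have hT : IsSelfAdjoint (B†.pcomp B) := isSelfAdjoint_adjoint_pcomp_self hBd hBc
  have hTpos := re_inner_adjoint_pcomp_self_nonneg hBd
  have hMd := dense_domain_pcomp_ofCLM hT.dense_domain h2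
  have hMc := isClosed_pcomp_ofCLM hBc A
  have hMM := eq_pcomp_ofCLM_adjoint_mul_self_of_le (isSelfAdjoint_adjoint_pcomp_self hMd hMc)
    (surjective_oneAdd_adjoint_pcomp_self hMd hMc) hT hTpos
    (ofCLM_adjoint_mul_self_pcomp_le_adjoint_pcomp_self hBd hMd h2)
  have hMM' := eq_pcomp_ofCLM_adjoint_mul_self_of_le (isSelfAdjoint_pcomp_adjoint_self hMd hMc)
    (surjective_oneAdd_pcomp_adjoint_self hMd hMc) hT hTpos
    (hBB ▸ ofCLM_adjoint_mul_self_pcomp_le_pcomp_adjoint_self hA hBd hMd h1)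
  exact ⟨hMd, hMc, hMM'.trans hMM.symm⟩

/-- If `B` is densely defined and closed, `A` is bounded, `A`, `B` and `AB` are all
normal, `A* A B ⊂ B A* A` and `A B* B ⊂ B* B A`, then `BA` is normal. -/
theorem kaplansky_unbounded_normal [TopologicalSpace.SeparableSpace H] (B : H →ₗ.[ℂ] H) (A : H →L[ℂ] H)
    (hBdense : Dense (B.domain : Set H)) (hBclosed : B.IsClosed)
    (hA : IsNormalOp A) (hB : IsNormalPMap B) (hAB : IsNormalPMap ((ofCLM A).pcomp B))
    (h1 : (ofCLM (ContinuousLinearMap.adjoint A * A)).pcomp B ≤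
      B.pcomp (ofCLM (ContinuousLinearMap.adjoint A * A)))
    (h2 : (ofCLM A).pcomp (B.adjoint.pcomp B) ≤ (B.adjoint.pcomp B).pcomp (ofCLM A)) :
    IsNormalPMap (B.pcomp (ofCLM A)) :=
  kaplansky_unbounded_normal_general B A hA hB h1 h2
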